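/- For a holomorphic foliation F on a complex surface with an invariant curve C = {f = 0} (f holomorphic, reduced), given a defining 1-form ω of F, there exist holomorphic functions g, k and a holomorphic 1-form η near a point p ∈ C such that gω = k df + f η with k not identically zero on C and k nonvanishing on C ∖ {p}. -/

import Mathlib

/-!
Write `ω = a dx + b dy`. Invariance says that `h = a f_y - b f_x` vanishes on `C`. Away from `p` the
curve is smooth, so `f` divides `h` locally there; the Cauchy integral of `h / f` along vertical
circles extends the quotient across `p`, giving `h = f c`. Hence, for every constant `s`,
`(f_x + s f_y) ω = (a + s b) df + f c (s dx - dy)`.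

It remains to choose `s` such that `a + s b` has no zero on `C ∖ {p}`. View `C` as a branched cover
of a disc in the `x`-line with sheets `v₁, …, vₙ`. Residues show that the power sums of the values
of an analytic function on the sheets are analytic in `x`, and by Newton's identities so is the norm
`∏ᵢ (a + s b)(x, vᵢ x)`. If it vanished identically for `n + 1` values of `s`, then by the
pigeonhole principle two of these factors would vanish on the same sheet, giving a common zero of
`a` and `b` on `C ∖ {p}`.
-/

namespace Suwa

open Metric Set Filter Topology MeasureTheory

/-! ### Division near a smooth zero locus -/

section ZeroLocus

variable {𝕜 E F G : Type*} [NontriviallyNormedField 𝕜]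
  [NormedAddCommGroup E] [NormedSpace 𝕜 E] [CompleteSpace E]
  [NormedAddCommGroup F] [NormedSpace 𝕜 F] [CompleteSpace F]
  [NormedAddCommGroup G] [NormedSpace 𝕜 G]
  {f : E → F} {f' : E →L[𝕜] F} {h : E → G} {h' : E →L[𝕜] G} {a : E}

lemma exists_tendsto_fiber_isBigO_sub (hf : HasStrictFDerivAt f f' a) (hsurj : f'.range = ⊤)
    (hker : f'.ker.ClosedComplemented) :
    ∃ π : E → E, Tendsto π (𝓝 a) (𝓝 a) ∧ (∀ᶠ z in 𝓝 a, f (π z) = f a) ∧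
      (fun z => z - π z) =O[𝓝 a] fun z => f z - f a := by
  let φ := hf.implicitFunctionDataOfComplemented f f' hsurj hker
  let Ψ : F × f'.ker → E := Function.uncurry φ.implicitFunction
  have hΨ : HasStrictFDerivAt Ψ _ (f a, φ.rightFun a) := φ.hasStrictFDerivAt.to_localInverse
  have hΨφ : ∀ᶠ z in 𝓝 a, Ψ (f z, φ.rightFun z) = z := φ.implicitFunction_apply_image
  have hright : ContinuousAt φ.rightFun a := φ.hasStrictFDerivAt_rightFun.continuousAt
  have htarget : Tendsto (fun z => (f a, φ.rightFun z)) (𝓝 a) (𝓝 (f a, φ.rightFun a)) :=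
    tendsto_const_nhds.prodMk_nhds hright
  refine ⟨fun z => Ψ (f a, φ.rightFun z), ?_, φ.leftFun_implicitFunction_eq_leftFun, ?_⟩
  · simpa only [Function.comp_def, hΨφ.self_of_nhds] using hΨ.continuousAt.tendsto.comp htarget
  · have hlip := hΨ.isBigO_sub.comp_tendsto
      ((hf.continuousAt.tendsto.prodMk_nhds hright).prodMk_nhds htarget)
    refine (hlip.congr' (hΨφ.mono fun z hz => ?_) .rfl).trans
      (Asymptotics.isBigO_of_le _ fun z => ?_)
    · simp only [Function.comp_apply, hz]
    · simp [Prod.norm_def]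

theorem isBigO_of_eventually_zero_imp_zero (hf : HasStrictFDerivAt f f' a) (hsurj : f'.range = ⊤)
    (hker : f'.ker.ClosedComplemented) (hh : HasStrictFDerivAt h h' a) (hfa : f a = 0)
    (hzero : ∀ᶠ z in 𝓝 a, f z = 0 → h z = 0) : h =O[𝓝 a] f := by
  obtain ⟨π, hπ, hfπ, hdist⟩ := exists_tendsto_fiber_isBigO_sub hf hsurj hker
  have hlip : (fun z => h z - h (π z)) =O[𝓝 a] fun z => z - π z :=
    hh.isBigO_sub.comp_tendsto (tendsto_id.prodMk_nhds hπ)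
  refine (hlip.trans hdist).congr' ?_ (by simp [hfa])
  filter_upwards [hfπ, hπ.eventually hzero] with z hfz hhz
  rw [hhz (hfz.trans hfa), sub_zero]

end ZeroLocus

theorem isBigO_of_fderiv_ne_zero {𝕜 E : Type*} [NontriviallyNormedField 𝕜] [CompleteSpace 𝕜]
    [NormedAddCommGroup E] [NormedSpace 𝕜 E] [CompleteSpace E]
    {f h : E → 𝕜} {a : E} (hf : AnalyticAt 𝕜 f a) (hh : AnalyticAt 𝕜 h a)
    (hfa : f a = 0 → fderiv 𝕜 f a ≠ 0) (hzero : ∀ᶠ z in 𝓝 a, f z = 0 → h z = 0) :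
    h =O[𝓝 a] f := by
  by_cases hfa0 : f a = 0
  · exact isBigO_of_eventually_zero_imp_zero hf.hasStrictFDerivAt
      (LinearMap.range_eq_top.2 (LinearMap.surjective (mod_cast hfa hfa0)))
      (ContinuousLinearMap.ker_closedComplemented_of_finiteDimensional_range _) hh.hasStrictFDerivAt
      hfa0 hzero
  · exact Asymptotics.isBigO_of_div_tendsto_nhds hzero _
      (hh.continuousAt.tendsto.div hf.continuousAt.tendsto hfa0)

theorem eventually_ne_zero_of_forall_sphere_ne_zero {E : Type*} [NormedAddCommGroup E]
    [NormedSpace ℂ E] {φ : ℂ → E} {c : ℂ} {r : ℝ}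
    (hφ : AnalyticOnNhd ℂ φ (closedBall c r)) (hsphere : ∀ w ∈ sphere c r, φ w ≠ 0) :
    ∀ w ∈ closedBall c r, ∀ᶠ u in 𝓝[≠] w, φ u ≠ 0 := by
  intro w hw
  refine (hφ w hw).eventually_eq_zero_or_eventually_ne_zero.resolve_left fun hzero => ?_
  obtain ⟨u, hu⟩ := NormedSpace.sphere_nonempty (x := c).2 (nonneg_of_mem_closedBall hw)
  exact hsphere u hu (hφ.eqOn_zero_of_preconnected_of_eventuallyEq_zero
    (convex_closedBall c r).isPreconnected hw hzero (sphere_subset_closedBall hu))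

theorem exists_analyticOnNhd_eventuallyEq_mul {𝕜 : Type*} [NontriviallyNormedField 𝕜]
    {K : Set 𝕜} {φ ψ : 𝕜 → 𝕜}
    (hφ : AnalyticOnNhd 𝕜 φ K) (hψ : AnalyticOnNhd 𝕜 ψ K)
    (hφ0 : ∀ w ∈ K, ∀ᶠ u in 𝓝[≠] w, φ u ≠ 0) (hO : ∀ w ∈ K, ψ =O[𝓝 w] φ) :
    ∃ q : 𝕜 → 𝕜, AnalyticOnNhd 𝕜 q K ∧ ∀ w ∈ K, ψ =ᶠ[𝓝 w] φ * q := by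
  have hmero : MeromorphicOn (ψ / φ) K := hψ.meromorphicOn.div hφ.meromorphicOn
  have horder : ∀ w ∈ K, 0 ≤ meromorphicOrderAt (ψ / φ) w := fun w hw => by
    by_contra! hneg
    have hbdd := (Asymptotics.div_isBoundedUnder_of_isBigO (hO w hw)).mono
      (nhdsWithin_le_nhds (s := {w}ᶜ))
    exact not_isBoundedUnder_of_tendsto_atTop (tendsto_norm_atTop_iff_cobounded.2
      (tendsto_cobounded_of_meromorphicOrderAt_neg hneg)) hbdd
  have hq : AnalyticOnNhd 𝕜 (toMeromorphicNFOn (ψ / φ) K) K := fun w hw =>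
    ((meromorphicNFOn_toMeromorphicNFOn (ψ / φ) K) hw).meromorphicOrderAt_nonneg_iff_analyticAt.1
      ((horder w hw).trans_eq (meromorphicOrderAt_toMeromorphicNFOn hmero hw).symm)
  refine ⟨toMeromorphicNFOn (ψ / φ) K, hq, fun w hw => ?_⟩
  refine (ContinuousAt.eventuallyEq_nhds_iff_eventuallyEq_nhdsNE (hψ w hw).continuousAt
    ((hφ w hw).continuousAt.mul (hq w hw).continuousAt)).1 ?_
  filter_upwards [hmero.toMeromorphicNFOn_eq_self_on_nhdsNE hw, hφ0 w hw] with u hu hφu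
  rw [Pi.mul_apply, hu, Pi.div_apply, mul_div_cancel₀ _ hφu]

theorem eq_mul_circleIntegral_div {r : ℝ} {φ ψ : ℂ → ℂ} {c y : ℂ}
    (hφ : AnalyticOnNhd ℂ φ (closedBall c r)) (hψ : AnalyticOnNhd ℂ ψ (closedBall c r))
    (hsphere : ∀ w ∈ sphere c r, φ w ≠ 0)
    (hO : ∀ w ∈ closedBall c r, ψ =O[𝓝 w] φ) (hy : y ∈ ball c r) :
    ψ y = φ y * ((2 * Real.pi * Complex.I)⁻¹ * ∮ w in C(c, r), ψ w / φ w * (w - y)⁻¹) := by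
  obtain ⟨q, hq, hψq⟩ := exists_analyticOnNhd_eventuallyEq_mul hφ hψ
    (eventually_ne_zero_of_forall_sphere_ne_zero hφ hsphere) hO
  have hcauchy := (hq.differentiableOn.diffContOnCl_ball
    subset_rfl).two_pi_i_inv_smul_circleIntegral_sub_inv_smul hy
  have hcongr : ∮ w in C(c, r), ψ w / φ w * (w - y)⁻¹ = ∮ w in C(c, r), (w - y)⁻¹ • q w := by
    refine circleIntegral.integral_congr (pos_of_mem_ball hy).le fun w hw => ?_
    have hw' := (hψq w (sphere_subset_closedBall hw)).self_of_nhds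
    rw [hw', Pi.mul_apply, mul_div_cancel_left₀ _ (hsphere w hw), smul_eq_mul, mul_comm]
  rw [(hψq y (ball_subset_closedBall hy)).self_of_nhds, Pi.mul_apply, hcongr, ← smul_eq_mul _⁻¹,
    hcauchy]

/-! ### Zeros of analytic functions and residues -/

/-- The family `v` enumerates the zeros of `φ` in `K`, repeated according to multiplicity. -/
structure IsZeroEnumeration {𝕜 ι : Type*} [NontriviallyNormedField 𝕜] [Fintype ι] (φ : 𝕜 → 𝕜)
    (K : Set 𝕜) (v : ι → 𝕜) : Prop where
  mem (i : ι) : v i ∈ K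
  exists_eventuallyEq : ∃ g : 𝕜 → 𝕜, AnalyticOnNhd 𝕜 g K ∧ (∀ w ∈ K, g w ≠ 0) ∧
    ∀ w ∈ K, φ =ᶠ[𝓝 w] fun u => (∏ i, (u - v i)) * g u

lemma exists_fin_prod_comp_eq_prod_pow {α M : Type*} [CommMonoid M] (s : Finset α) (m : α → ℕ) :
    ∃ (n : ℕ) (v : Fin n → α), (∀ i, v i ∈ s) ∧
      ∀ F : α → M, ∏ i, F (v i) = ∏ u ∈ s, F u ^ m u := by
  let e := Fintype.equivFin (Σ u : s, Fin (m u))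
  refine ⟨_, fun i => (e.symm i).1, fun i => (e.symm i).1.2, fun F => ?_⟩
  rw [e.symm.prod_comp fun j => F j.1, Fintype.prod_sigma, ← s.prod_coe_sort]
  simp only [Finset.prod_const, Finset.card_univ, Fintype.card_fin]

namespace IsZeroEnumeration

variable {𝕜 ι : Type*} [NontriviallyNormedField 𝕜] [Fintype ι] {φ : 𝕜 → 𝕜} {K : Set 𝕜} {v : ι → 𝕜}

lemma eq_zero_iff (hv : IsZeroEnumeration φ K v) {w : 𝕜} (hw : w ∈ K) :
    φ w = 0 ↔ w ∈ range v := by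
  obtain ⟨g, -, hg0, hφg⟩ := hv.exists_eventuallyEq
  simp only [(hφg w hw).self_of_nhds, mul_eq_zero, hg0 w hw, or_false, Finset.prod_eq_zero_iff,
    Finset.mem_univ, true_and, sub_eq_zero, mem_range, @eq_comm _ w]

end IsZeroEnumeration

theorem exists_isZeroEnumeration {𝕜 : Type*} [NontriviallyNormedField 𝕜]
    {φ : 𝕜 → 𝕜} {K : Set 𝕜} (hK : IsCompact K) (hK' : Preperfect K)
    (hφ : AnalyticOnNhd 𝕜 φ K) (hφ0 : ∀ w ∈ K, ∀ᶠ u in 𝓝[≠] w, φ u ≠ 0) :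
    ∃ (n : ℕ) (v : Fin n → 𝕜), IsZeroEnumeration φ K v := by
  set D := MeromorphicOn.divisor φ K
  have hfin : D.support.Finite := D.finiteSupport hK
  obtain ⟨g, hg, hg0, hφg⟩ := hφ.meromorphicOn.extract_zeros_poles
    (fun w => (meromorphicOrderAt_ne_top_iff_eventually_ne_zero (hφ w w.2).meromorphicAt).2
      (hφ0 w w.2)) hfin
  obtain ⟨n, v, hvK, hprod⟩ :=
    exists_fin_prod_comp_eq_prod_pow (M := 𝕜) hfin.toFinset fun u => (D u).toNat
  have hfactor : (∏ᶠ u, (· - u) ^ D u) = fun w : 𝕜 => ∏ i, (w - v i) := by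
    rw [Function.FactorizedRational.finprod_eq_fun hfin]
    ext w
    rw [hprod fun u => w - u, finprod_eq_finsetProd_of_mulSupport_subset (s := hfin.toFinset)]
    · refine Finset.prod_congr rfl fun u _ => ?_
      rw [← zpow_natCast, Int.toNat_of_nonneg (MeromorphicOn.AnalyticOnNhd.divisor_nonneg hφ u)]
    · intro u hu
      simp only [Finite.coe_toFinset, Function.mem_support]
      exact fun h0 => hu (by simp [h0])
  rw [hfactor] at hφg
  refine ⟨n, v, fun i => D.supportWithinDomain (hfin.mem_toFinset.1 (hvK i)), g, hg,
    fun w hw => hg0 ⟨w, hw⟩, fun w hw => ?_⟩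
  have hP : AnalyticAt 𝕜 (fun u => (∏ i, (u - v i)) * g u) w :=
    (Finset.analyticAt_fun_prod _ fun i _ => by fun_prop).fun_mul (hg w hw)
  exact ((hφ w hw).continuousAt.eventuallyEq_nhds_iff_eventuallyEq_nhdsNE hP.continuousAt).1
    ((hφ w hw).meromorphicAt.eventuallyEq_nhdsNE_of_eventuallyEq_codiscreteWithin_preperfect
      hP.meromorphicAt hw hK' hφg)

theorem exists_isZeroEnumeration_closedBall {φ : ℂ → ℂ} {c : ℂ} {r : ℝ} (hr : 0 < r)
    (hφ : AnalyticOnNhd ℂ φ (closedBall c r)) (hsphere : ∀ w ∈ sphere c r, φ w ≠ 0) :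
    ∃ (n : ℕ) (v : Fin n → ℂ), IsZeroEnumeration φ (closedBall c r) v := by
  have hnontrivial : (closedBall c r).Nontrivial :=
    (infinite_of_mem_nhds c (closedBall_mem_nhds c hr)).nontrivial
  exact exists_isZeroEnumeration (isCompact_closedBall c r)
    ((convex_closedBall c r).isPreconnected.preperfect_of_nontrivial hnontrivial) hφ
    (eventually_ne_zero_of_forall_sphere_ne_zero hφ hsphere)

lemma logDeriv_eq_sum_inv_add {𝕜 ι : Type*} [NontriviallyNormedField 𝕜] [Fintype ι]
    {φ g : 𝕜 → 𝕜} {v : ι → 𝕜} {w : 𝕜} (hφg : φ =ᶠ[𝓝 w] fun u => (∏ i, (u - v i)) * g u)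
    (hg : DifferentiableAt 𝕜 g w) (hφw : φ w ≠ 0) :
    logDeriv φ w = ∑ i, (w - v i)⁻¹ + logDeriv g w := by
  obtain ⟨hprod, hg0⟩ := mul_ne_zero_iff.1 (hφg.self_of_nhds ▸ hφw)
  have hlinear (i : ι) : logDeriv (fun u => u - v i) w = (w - v i)⁻¹ := by
    simp [logDeriv_apply]
  rw [(logDeriv_congr_nhds hφg).self_of_nhds, logDeriv_mul w hprod hg0 (by fun_prop) hg,
    logDeriv_prod (Finset.prod_ne_zero_iff.1 hprod) fun i _ => by fun_prop]
  simp only [hlinear]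

namespace IsZeroEnumeration

variable {ι : Type*} [Fintype ι] {φ κ : ℂ → ℂ} {c : ℂ} {r : ℝ} {v : ι → ℂ}

lemma mem_ball (hv : IsZeroEnumeration φ (closedBall c r) v)
    (hsphere : ∀ w ∈ sphere c r, φ w ≠ 0) (i : ι) : v i ∈ ball c r := by
  rw [← closedBall_sdiff_sphere]
  exact ⟨hv.mem i, fun hi => hsphere _ hi ((hv.eq_zero_iff (hv.mem i)).2 (mem_range_self i))⟩

theorem circleIntegral_mul_logDeriv (hv : IsZeroEnumeration φ (closedBall c r) v) (hr : 0 < r)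
    (hsphere : ∀ w ∈ sphere c r, φ w ≠ 0) (hκ : AnalyticOnNhd ℂ κ (closedBall c r)) :
    ∮ w in C(c, r), κ w * logDeriv φ w = 2 * Real.pi * Complex.I * ∑ i, κ (v i) := by
  obtain ⟨g, hg, hg0, hφg⟩ := hv.exists_eventuallyEq
  have hlog : EqOn (fun w => κ w * logDeriv φ w)
      (fun w => ∑ i, (w - v i)⁻¹ • κ w + κ w * logDeriv g w) (sphere c r) := fun w hw => by
    have hw' := sphere_subset_closedBall hw
    simp only [logDeriv_eq_sum_inv_add (hφg w hw') (hg w hw').differentiableAt (hsphere w hw),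
      smul_eq_mul, mul_comm (κ w), add_mul, Finset.sum_mul]
  have hcauchy (i : ι) : ∮ w in C(c, r), (w - v i)⁻¹ • κ w = (2 * Real.pi * Complex.I) • κ (v i) :=
    hκ.differentiableOn.circleIntegral_sub_inv_smul (hv.mem_ball hsphere i)
  have hκlog : DifferentiableOn ℂ (fun w => κ w * logDeriv g w) (closedBall c r) :=
    (hκ.mul (hg.deriv.div hg hg0)).differentiableOn
  have hkernel (i : ι) : CircleIntegrable (fun w => (w - v i)⁻¹ • κ w) c r := by
    have hsub : ∀ w ∈ sphere c r, w - v i ≠ 0 := fun w hw h =>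
      (Metric.mem_ball.1 (hv.mem_ball hsphere i)).ne (sub_eq_zero.1 h ▸ hw)
    exact (((continuousOn_id.sub continuousOn_const).inv₀ hsub).smul
      (hκ.continuousOn.mono sphere_subset_closedBall)).circleIntegrable hr.le
  rw [circleIntegral.integral_congr hr.le hlog, circleIntegral.integral_add
      (CircleIntegrable.fun_sum _ fun i _ => hkernel i)
      ((hκlog.continuousOn.mono sphere_subset_closedBall).circleIntegrable hr.le),
    circleIntegral.integral_fun_sum fun i _ => hkernel i,
    (hκlog.diffContOnCl_ball subset_rfl).circleIntegral_eq_zero hr.le, add_zero, Finset.mul_sum]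
  exact Finset.sum_congr rfl fun i _ => hcauchy i

end IsZeroEnumeration

/-! ### Analytic dependence of circle integrals on parameters -/

section ParametricIntegral

variable {Y F : Type*} [TopologicalSpace Y] [CompactSpace Y] [NormedAddCommGroup F]
  [NormedSpace ℂ F] [CompleteSpace F]

lemma analyticAt_continuousMap_of_eval {Φ : ℂ → C(Y, F)} {x₀ : ℂ} {ρ : ℝ} (hρ : 0 < ρ)
    (hcont : ContinuousOn Φ (closedBall x₀ ρ))
    (hdiff : ∀ t, DifferentiableOn ℂ (fun x => Φ x t) (closedBall x₀ ρ)) : AnalyticAt ℂ Φ x₀ := by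
  lift ρ to NNReal using hρ.le
  have hsphere : ContinuousOn Φ (sphere x₀ ρ) := hcont.mono sphere_subset_closedBall
  refine (hasFPowerSeriesOn_cauchy_integral (hsphere.circleIntegrable hρ.le)
    (mod_cast hρ)).analyticAt.congr ?_
  filter_upwards [ball_mem_nhds x₀ hρ] with x hx
  ext t
  have hne : ∀ z ∈ sphere x₀ (ρ : ℝ), z - x ≠ 0 := fun z hz h =>
    (mem_ball.1 hx).ne (sub_eq_zero.1 h ▸ hz)
  have hkernel : ContinuousOn (fun z => (z - x)⁻¹ • Φ z) (sphere x₀ ρ) :=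
    (ContinuousOn.inv₀ (by fun_prop) hne).smul hsphere
  have heval := (ContinuousMap.evalCLM ℂ t).intervalIntegral_comp_comm
    (hkernel.circleIntegrable hρ.le).out
  have hcauchy := ((hdiff t).diffContOnCl_ball
    subset_rfl).two_pi_i_inv_smul_circleIntegral_sub_inv_smul hx
  rw [← hcauchy, ContinuousMap.smul_apply]
  exact congrArg _ heval.symm

theorem analyticAt_mkD {G : ℂ → Y → F} {x₀ : ℂ}
    (hG : ∀ t, ∀ᶠ q in 𝓝 (x₀, t), ContinuousAt ↿G q ∧ DifferentiableAt ℂ (fun x => G x q.2) q.1) :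
    AnalyticAt ℂ (fun x => ContinuousMap.mkD (G x) 0) x₀ ∧ ∀ᶠ x in 𝓝 x₀, Continuous (G x) := by
  have htube : ∀ᶠ x in 𝓝 x₀, ∀ t ∈ univ, ContinuousAt ↿G (x, t) ∧
      DifferentiableAt ℂ (fun x => G x t) x :=
    isCompact_univ.eventually_forall_of_forall_eventually fun t _ => hG t
  obtain ⟨ρ, hρ, hball⟩ := nhds_basis_closedBall.eventually_iff.1 htube
  have hcont (x) (hx : x ∈ closedBall x₀ ρ) : Continuous (G x) :=
    continuous_iff_continuousAt.2 fun t => (hball hx t trivial).1.comp (f := (x, ·)) (by fun_prop)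
  have heval (x) (hx : x ∈ closedBall x₀ ρ) (t : Y) : ContinuousMap.mkD (G x) 0 t = G x t :=
    ContinuousMap.mkD_apply_of_continuous (hcont x hx)
  refine ⟨analyticAt_continuousMap_of_eval hρ
    (ContinuousMap.continuousOn_of_continuousOn_uncurry _ fun q hq => ?_) fun t x hx => ?_,
    mem_of_superset (closedBall_mem_nhds x₀ hρ) hcont⟩
  · exact (hball hq.1 q.2 trivial).1.continuousWithinAt.congr (fun q hq => heval q.1 hq.1 q.2)
      (heval q.1 hq.1 q.2)
  · exact (hball hx t trivial).2.differentiableWithinAt.congr (fun y hy => heval y hy t)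
      (heval x hx t)

/-- Integration against a finite measure on a compact space, as a continuous linear functional on
continuous functions. -/
noncomputable def integralCLM [MeasurableSpace Y] [BorelSpace Y] [SecondCountableTopologyEither Y F]
    (μ : Measure Y) [IsFiniteMeasure μ] : C(Y, F) →L[ℂ] F :=
  L1.integralCLM' ℂ ∘L ContinuousMap.toLp 1 μ ℂ

lemma integralCLM_apply [MeasurableSpace Y] [BorelSpace Y] [SecondCountableTopologyEither Y F]
    (μ : Measure Y) [IsFiniteMeasure μ] (φ : C(Y, F)) : integralCLM μ φ = ∫ t, φ t ∂μ := by
  rw [integralCLM, ContinuousLinearMap.comp_apply, ← L1.integral_eq', L1.integral_eq_integral]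
  exact integral_congr_ae (ContinuousMap.coeFn_toLp μ φ)

end ParametricIntegral

attribute [local instance] Measure.Subtype.measureSpace

lemma circleIntegral_eq_integral_Icc {F : Type*} [NormedAddCommGroup F] [NormedSpace ℂ F]
    (φ : ℂ → F) (c : ℂ) (r : ℝ) : ∮ w in C(c, r), φ w =
      ∫ θ : Icc 0 (2 * Real.pi), deriv (circleMap c r) θ • φ (circleMap c r θ) := by
  rw [circleIntegral, intervalIntegral.integral_of_le Real.two_pi_pos.le,
    ← integral_Icc_eq_integral_Ioc, ← integral_subtype measurableSet_Icc]

lemma analyticAt_mkD_comp_circleMap {A : ℂ × ℂ → ℂ} {x₀ c : ℂ} {r : ℝ} (hr : 0 ≤ r)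
    (hA : ∀ w ∈ sphere c r, AnalyticAt ℂ A (x₀, w)) (S : Set ℝ) [CompactSpace S] :
    AnalyticAt ℂ (fun x => ContinuousMap.mkD (fun θ : S => A (x, circleMap c r θ)) 0) x₀ ∧
      ∀ᶠ x in 𝓝 x₀, Continuous fun θ : S => A (x, circleMap c r θ) := by
  refine analyticAt_mkD fun θ => ?_
  let γ : ℂ × S → ℂ × ℂ := fun q => (q.1, circleMap c r q.2)
  have hγ : Continuous γ := by fun_prop
  have hnear := (hA _ (circleMap_mem_sphere c hr θ)).eventually_analyticAt
  filter_upwards [(hγ.tendsto (x₀, θ)).eventually hnear] with q hq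
  exact ⟨hq.continuousAt.comp (f := γ) hγ.continuousAt, hq.curry_left.differentiableAt⟩

theorem analyticAt_circleIntegral_mul {A B : ℂ × ℂ → ℂ} {x₀ y₀ c : ℂ} {r : ℝ} (hr : 0 ≤ r)
    (hA : ∀ w ∈ sphere c r, AnalyticAt ℂ A (x₀, w))
    (hB : ∀ w ∈ sphere c r, AnalyticAt ℂ B (y₀, w)) :
    AnalyticAt ℂ (fun z : ℂ × ℂ => ∮ w in C(c, r), A (z.1, w) * B (z.2, w)) (x₀, y₀) := by
  let S := Icc 0 (2 * Real.pi)
  obtain ⟨hΦ, hAcont⟩ := analyticAt_mkD_comp_circleMap hr hA S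
  obtain ⟨hΨ, hBcont⟩ := analyticAt_mkD_comp_circleMap hr hB S
  set Φ : ℂ → C(S, ℂ) := fun x => ContinuousMap.mkD (fun θ : S => A (x, circleMap c r θ)) 0
  set Ψ : ℂ → C(S, ℂ) := fun y => ContinuousMap.mkD (fun θ : S => B (y, circleMap c r θ)) 0
  let δ : C(S, ℂ) := ⟨fun θ => deriv (circleMap c r) θ,
    ((contDiff_circleMap c r).continuous_deriv le_rfl).comp continuous_subtype_val⟩
  have hfst : AnalyticAt ℂ (fun z : ℂ × ℂ => Φ z.1) (x₀, y₀) := hΦ.comp_of_eq analyticAt_fst rfl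
  have hsnd : AnalyticAt ℂ (fun z : ℂ × ℂ => Ψ z.2) (x₀, y₀) := hΨ.comp_of_eq analyticAt_snd rfl
  have : IsFiniteMeasureOnCompacts (volume : Measure S) :=
    .comap' _ continuous_subtype_val (.subtype_coe measurableSet_Icc)
  refine (((integralCLM volume).analyticAt _).fun_comp
    (analyticAt_const (v := δ).fun_mul (hfst.fun_mul hsnd))).congr ?_
  filter_upwards [hAcont.prod_nhds hBcont] with z hz
  rw [circleIntegral_eq_integral_Icc, integralCLM_apply]
  refine integral_congr_ae (.of_forall fun θ => ?_)
  simp only [ContinuousMap.mul_apply, Φ, Ψ, ContinuousMap.mkD_apply_of_continuous hz.1,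
    ContinuousMap.mkD_apply_of_continuous hz.2]
  rfl

/-! ### Newton's identities and the pigeonhole argument -/

section Newton

variable {𝕜 E ι : Type*} [NontriviallyNormedField 𝕜] [CharZero 𝕜] [NormedAddCommGroup E]
  [NormedSpace 𝕜 E] [Fintype ι] {v : E → ι → 𝕜} {x₀ : E}

lemma analyticAt_aeval_esymm (hpsum : ∀ j : ℕ, AnalyticAt 𝕜 (fun x => ∑ i, v x i ^ j) x₀) (m : ℕ) :
    AnalyticAt 𝕜 (fun x => MvPolynomial.aeval (v x) (MvPolynomial.esymm ι 𝕜 m)) x₀ := by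
  classical
  induction m using Nat.strong_induction_on with
  | _ m ih =>
    obtain rfl | hm := eq_or_ne m 0
    · simpa only [MvPolynomial.esymm_zero, map_one] using analyticAt_const
    have hnewton (x : E) : MvPolynomial.aeval (v x) (MvPolynomial.esymm ι 𝕜 m) =
        (m : 𝕜)⁻¹ * ((-1) ^ (m + 1) * ∑ a ∈ Finset.HasAntidiagonal.antidiagonal m with a.1 < m,
          (-1) ^ a.1 * MvPolynomial.aeval (v x) (MvPolynomial.esymm ι 𝕜 a.1) *
            ∑ i, v x i ^ a.2) := by
      rw [eq_inv_mul_iff_mul_eq₀ (Nat.cast_ne_zero.2 hm)]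
      simpa [MvPolynomial.psum] using
        congrArg (MvPolynomial.aeval (v x)) (MvPolynomial.mul_esymm_eq_sum ι 𝕜 m)
    simp only [hnewton]
    refine analyticAt_const.fun_mul (analyticAt_const.fun_mul
      (Finset.analyticAt_fun_sum _ fun a ha => ?_))
    exact (analyticAt_const.fun_mul (ih _ (Finset.mem_filter.1 ha).2)).fun_mul (hpsum _)

theorem analyticAt_prod_of_analyticAt_psum
    (hpsum : ∀ j : ℕ, AnalyticAt 𝕜 (fun x => ∑ i, v x i ^ j) x₀) :
    AnalyticAt 𝕜 (fun x => ∏ i, v x i) x₀ := by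
  refine (analyticAt_aeval_esymm hpsum (Fintype.card ι)).congr (.of_forall fun x => ?_)
  simp only [MvPolynomial.esymm, ← Finset.card_univ, Finset.powersetCard_self,
    Finset.sum_singleton, map_prod, MvPolynomial.aeval_X]

end Newton

lemma exists_eq_zero_and_eq_zero_of_prod_add_natCast_mul_eq_zero {R ι : Type*} [CommRing R]
    [IsDomain R] [CharZero R] [Fintype ι] {a b : ι → R}
    (h : ∀ s : Fin (Fintype.card ι + 1), ∏ i, (a i + (s : ℕ) * b i) = 0) :
    ∃ i, a i = 0 ∧ b i = 0 := by
  choose i hi using fun s => (Finset.prod_eq_zero_iff.1 (h s)).imp fun _ hi => hi.2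
  obtain ⟨s, t, hst, hit⟩ := Fintype.exists_ne_map_eq_of_card_lt i (by simp)
  have hs : a (i t) + (s : ℕ) * b (i t) = 0 := hit ▸ hi s
  have hsub : ((s : ℕ) - (t : ℕ) : R) * b (i t) = 0 := by linear_combination hs - hi t
  have hne : ((s : ℕ) - (t : ℕ) : R) ≠ 0 :=
    sub_ne_zero.2 fun hcast => hst (Fin.ext (Nat.cast_injective hcast))
  have hb : b (i t) = 0 := (mul_eq_zero.1 hsub).resolve_left hne
  exact ⟨i t, by simpa [hb] using hi t, hb⟩

/-! ### Weierstrass bidiscs -/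

/-- A closed bidisc around `p` as in the Weierstrass preparation theorem: `f` has no zero on its
vertical boundary and none on its central vertical slice, except possibly `p`. -/
structure IsWeierstrassBidisc (f : ℂ × ℂ → ℂ) (p : ℂ × ℂ) (ρ r : ℝ) : Prop where
  radius_fst_pos : 0 < ρ
  radius_snd_pos : 0 < r
  analyticOnNhd : AnalyticOnNhd ℂ f (closedBall p.1 ρ ×ˢ closedBall p.2 r)
  ne_zero_of_mem_sphere {x w : ℂ} (hx : x ∈ closedBall p.1 ρ) (hw : w ∈ sphere p.2 r) :
    f (x, w) ≠ 0
  eq_of_eq_zero {w : ℂ} (hw : w ∈ closedBall p.2 r) (hfw : f (p.1, w) = 0) : w = p.2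

theorem exists_isWeierstrassBidisc {f : ℂ × ℂ → ℂ} {p : ℂ × ℂ} (hf : AnalyticAt ℂ f p)
    (hslice : ¬∀ᶠ w in 𝓝 p.2, f (p.1, w) = 0) {P : ℂ × ℂ → Prop} (hP : ∀ᶠ z in 𝓝 p, P z) :
    ∃ ρ r, IsWeierstrassBidisc f p ρ r ∧ ∀ z ∈ closedBall p.1 ρ ×ˢ closedBall p.2 r, P z := by
  have hzero : ∀ᶠ w in 𝓝 p.2, f (p.1, w) = 0 → w = p.2 := by
    have hf_slice : AnalyticAt ℂ (fun w => f (p.1, w)) p.2 := AnalyticAt.curry_right (f := f) hf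
    have hne := hf_slice.eventually_eq_zero_or_eventually_ne_zero.resolve_left hslice
    filter_upwards [eventually_nhdsWithin_iff.1 hne] with w hw hfw
    exact not_not.1 fun h => hw h hfw
  obtain ⟨r₁, hr₁, hslice_ball⟩ := nhds_basis_closedBall.eventually_iff.1 hzero
  obtain ⟨r₂, hr₂, hball⟩ := nhds_basis_closedBall.eventually_iff.1
    (hf.eventually_analyticAt.and hP)
  let r := min r₁ r₂
  have hr : 0 < r := lt_min hr₁ hr₂
  have heq {w : ℂ} (hw : w ∈ closedBall p.2 r) : f (p.1, w) = 0 → w = p.2 :=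
    hslice_ball (closedBall_subset_closedBall (min_le_left _ _) hw)
  have hbidisc {z : ℂ × ℂ} (hz : z ∈ closedBall p.1 r ×ˢ closedBall p.2 r) :=
    hball (closedBall_subset_closedBall (min_le_right r₁ r₂) (closedBall_prod_same p.1 p.2 r ▸ hz))
  have htube : ∀ᶠ x in 𝓝 p.1, ∀ w ∈ sphere p.2 r, f (x, w) ≠ 0 := by
    refine (isCompact_sphere p.2 r).eventually_forall_of_forall_eventually fun w hw => ?_
    have hw' := sphere_subset_closedBall hw
    have hfw := (hbidisc (z := (p.1, w)) ⟨mem_closedBall_self hr.le, hw'⟩).1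
    exact hfw.continuousAt.eventually_ne fun h0 => ne_of_mem_sphere hw hr.ne' (heq hw' h0)
  obtain ⟨ρ, hρ, hρsphere⟩ := nhds_basis_closedBall.eventually_iff.1 htube
  have hsub : closedBall p.1 (min ρ r) ⊆ closedBall p.1 r :=
    closedBall_subset_closedBall (min_le_right _ _)
  exact ⟨min ρ r, r, ⟨lt_min hρ hr, hr, fun z hz => (hbidisc ⟨hsub hz.1, hz.2⟩).1,
    fun hx hw => hρsphere (closedBall_subset_closedBall (min_le_left _ _) hx) _ hw, heq⟩,
    fun z hz => (hbidisc ⟨hsub hz.1, hz.2⟩).2⟩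

lemma analyticOnNhd_slice {h : ℂ × ℂ → ℂ} {s t : Set ℂ} (hh : AnalyticOnNhd ℂ h (s ×ˢ t)) {x : ℂ}
    (hx : x ∈ s) : AnalyticOnNhd ℂ (fun w => h (x, w)) t :=
  fun w hw => (hh (x, w) ⟨hx, hw⟩).curry_right

section PartialDerivatives

variable {𝕜 F : Type*} [NontriviallyNormedField 𝕜] [NormedAddCommGroup F] [NormedSpace 𝕜 F]
  {f : 𝕜 × 𝕜 → F} {z : 𝕜 × 𝕜}

lemma hasDerivAt_prodMk_left (hf : DifferentiableAt 𝕜 f z) :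
    HasDerivAt (fun t => f (t, z.2)) (fderiv 𝕜 f z (1, 0)) z.1 :=
  hf.hasFDerivAt.comp_hasDerivAt z.1 ((hasDerivAt_id z.1).prodMk (hasDerivAt_const z.1 z.2))

lemma hasDerivAt_prodMk_right (hf : DifferentiableAt 𝕜 f z) :
    HasDerivAt (fun t => f (z.1, t)) (fderiv 𝕜 f z (0, 1)) z.2 :=
  hf.hasFDerivAt.comp_hasDerivAt z.2 ((hasDerivAt_const z.2 z.1).prodMk (hasDerivAt_id z.2))

end PartialDerivatives

lemma analyticOnNhd_fderiv_apply {𝕜 E F : Type*} [NontriviallyNormedField 𝕜]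
    [NormedAddCommGroup E] [NormedSpace 𝕜 E] [NormedAddCommGroup F] [NormedSpace 𝕜 F]
    [CompleteSpace F] {f : E → F} {s : Set E} (hf : AnalyticOnNhd 𝕜 f s) (v : E) :
    AnalyticOnNhd 𝕜 (fun z => fderiv 𝕜 f z v) s := fun z hz =>
  ((ContinuousLinearMap.apply 𝕜 F v).analyticAt _).fun_comp (hf z hz).fderiv

lemma eventually_eq_of_continuousAt_natCast {X : Type*} [TopologicalSpace X] {n : X → ℕ} {x₀ : X}
    (hn : ContinuousAt (fun x => (n x : ℂ)) x₀) : ∀ᶠ x in 𝓝 x₀, n x = n x₀ := by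
  have hreal : ContinuousAt ((fun m : ℕ => (m : ℝ)) ∘ n) x₀ :=
    Complex.continuous_re.continuousAt.comp hn
  have := (Nat.isClosedEmbedding_coe_real.isInducing.continuousAt_iff).2 hreal
  simpa using this.tendsto

namespace IsWeierstrassBidisc

variable {f : ℂ × ℂ → ℂ} {p : ℂ × ℂ} {ρ r : ℝ}

lemma prod_ball_mem_nhds (hB : IsWeierstrassBidisc f p ρ r) : ball p.1 ρ ×ˢ ball p.2 r ∈ 𝓝 p :=
  prod_mem_nhds (ball_mem_nhds _ hB.radius_fst_pos) (ball_mem_nhds _ hB.radius_snd_pos)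

lemma analyticAt_div (hB : IsWeierstrassBidisc f p ρ r) {h : ℂ × ℂ → ℂ}
    (hh : AnalyticOnNhd ℂ h (closedBall p.1 ρ ×ˢ closedBall p.2 r)) {w : ℂ}
    (hw : w ∈ sphere p.2 r) : AnalyticAt ℂ (fun z => h z / f z) (p.1, w) := by
  have hx : p.1 ∈ closedBall p.1 ρ := mem_closedBall_self hB.radius_fst_pos.le
  have hw' := sphere_subset_closedBall hw
  exact (hh (p.1, w) ⟨hx, hw'⟩).fun_div (hB.analyticOnNhd (p.1, w) ⟨hx, hw'⟩)
    (hB.ne_zero_of_mem_sphere (x := p.1) (w := w) hx hw)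

theorem exists_eventually_eq_mul (hB : IsWeierstrassBidisc f p ρ r) {h : ℂ × ℂ → ℂ}
    (hh : AnalyticOnNhd ℂ h (closedBall p.1 ρ ×ˢ closedBall p.2 r))
    (hO : ∀ z ∈ closedBall p.1 ρ ×ˢ closedBall p.2 r, z ≠ p → h =O[𝓝 z] f) :
    ∃ c, AnalyticAt ℂ c p ∧ ∀ᶠ z in 𝓝 p, h z = f z * c z := by
  let c : ℂ × ℂ → ℂ := fun z => (2 * Real.pi * Complex.I)⁻¹ *
    ∮ w in C(p.2, r), h (z.1, w) / f (z.1, w) * (w - z.2)⁻¹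
  have hkernel : ∀ w ∈ sphere p.2 r, AnalyticAt ℂ (fun q : ℂ × ℂ => (q.2 - q.1)⁻¹) (p.2, w) :=
    fun w hw => (analyticAt_snd.fun_sub analyticAt_fst).fun_inv
      (sub_ne_zero.2 (ne_of_mem_sphere hw hB.radius_snd_pos.ne'))
  have hc : AnalyticAt ℂ c p := analyticAt_const.fun_mul (analyticAt_circleIntegral_mul
    (A := fun z => h z / f z) (B := fun q => (q.2 - q.1)⁻¹) (x₀ := p.1) (y₀ := p.2)
    hB.radius_snd_pos.le (fun w hw => hB.analyticAt_div hh hw) hkernel)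
  refine ⟨c, hc, ?_⟩
  have hoff : ∀ x ∈ ball p.1 ρ, x ≠ p.1 → ∀ y ∈ ball p.2 r, h (x, y) = f (x, y) * c (x, y) := by
    intro x hx hxp y hy
    have hx' := ball_subset_closedBall hx
    refine eq_mul_circleIntegral_div (φ := fun w => f (x, w)) (ψ := fun w => h (x, w))
      (analyticOnNhd_slice hB.analyticOnNhd hx') (analyticOnNhd_slice hh hx')
      (fun w hw => hB.ne_zero_of_mem_sphere hx' hw) (fun w hw => ?_) hy
    exact (hO (x, w) ⟨hx', hw⟩ fun hp => hxp (congrArg Prod.fst hp)).comp_tendsto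
      ((Continuous.prodMk_right x).tendsto w)
  filter_upwards [hB.prod_ball_mem_nhds, hc.eventually_analyticAt] with ⟨x, y⟩ ⟨hx, hy⟩ hcxy
  have hxy : (x, y) ∈ closedBall p.1 ρ ×ˢ closedBall p.2 r :=
    ⟨ball_subset_closedBall hx, ball_subset_closedBall hy⟩
  by_cases hxp : x = p.1
  · have hleft : ContinuousAt (fun u => h (u, y)) x := (hh _ hxy).curry_left.continuousAt
    have hright : ContinuousAt (fun u => f (u, y) * c (u, y)) x :=
      ((hB.analyticOnNhd _ hxy).fun_mul hcxy).curry_left.continuousAt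
    have hne : (fun u => h (u, y)) =ᶠ[𝓝[≠] x] fun u => f (u, y) * c (u, y) := by
      filter_upwards [nhdsWithin_le_nhds (isOpen_ball.mem_nhds hx), self_mem_nhdsWithin]
        with u hu hux using hoff u hu (hxp ▸ hux) y hy
    exact ((hleft.eventuallyEq_nhds_iff_eventuallyEq_nhdsNE hright).1 hne).self_of_nhds
  · exact hoff x hx hxp y hy

theorem analyticAt_circleIntegral_mul_logDeriv (hB : IsWeierstrassBidisc f p ρ r)
    {κ : ℂ × ℂ → ℂ} (hκ : AnalyticOnNhd ℂ κ (closedBall p.1 ρ ×ˢ closedBall p.2 r)) :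
    AnalyticAt ℂ (fun x => ∮ w in C(p.2, r), κ (x, w) * logDeriv (fun u => f (x, u)) w) p.1 := by
  have hderiv : AnalyticOnNhd ℂ (fun z => κ z * fderiv ℂ f z (0, 1))
      (closedBall p.1 ρ ×ˢ closedBall p.2 r) :=
    hκ.mul (analyticOnNhd_fderiv_apply hB.analyticOnNhd (0, 1))
  have hint : AnalyticAt ℂ
      (fun z : ℂ × ℂ => ∮ w in C(p.2, r), κ (z.1, w) * fderiv ℂ f (z.1, w) (0, 1) / f (z.1, w) * 1)
      (p.1, p.2) :=
    analyticAt_circleIntegral_mul (A := fun z => κ z * fderiv ℂ f z (0, 1) / f z) (B := 1)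
      hB.radius_snd_pos.le (fun w hw => hB.analyticAt_div hderiv hw) fun _ _ => analyticAt_const
  refine hint.curry_left.congr ?_
  filter_upwards [ball_mem_nhds p.1 hB.radius_fst_pos] with x hx
  refine circleIntegral.integral_congr hB.radius_snd_pos.le fun w hw => ?_
  have hfxw := hB.analyticOnNhd (x, w) ⟨ball_subset_closedBall hx, sphere_subset_closedBall hw⟩
  have hfw := (hasDerivAt_prodMk_right hfxw.differentiableAt).deriv
  simp only [mul_one, logDeriv_apply, hfw, mul_div_assoc]

lemma analyticAt_sum_of_isZeroEnumeration (hB : IsWeierstrassBidisc f p ρ r) {κ : ℂ × ℂ → ℂ}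
    (hκ : AnalyticOnNhd ℂ κ (closedBall p.1 ρ ×ˢ closedBall p.2 r)) {ι : ℂ → Type*}
    [∀ x, Fintype (ι x)] {v : ∀ x, ι x → ℂ}
    (hv : ∀ᶠ x in 𝓝 p.1, IsZeroEnumeration (fun w => f (x, w)) (closedBall p.2 r) (v x)) :
    AnalyticAt ℂ (fun x => ∑ i, κ (x, v x i)) p.1 := by
  refine (analyticAt_const.fun_mul (hB.analyticAt_circleIntegral_mul_logDeriv hκ)
    (f := fun _ => (2 * Real.pi * Complex.I)⁻¹)).congr ?_
  filter_upwards [hv, ball_mem_nhds p.1 hB.radius_fst_pos] with x hvx hx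
  have hx' := ball_subset_closedBall hx
  have htrace := hvx.circleIntegral_mul_logDeriv hB.radius_snd_pos
    (fun w hw => hB.ne_zero_of_mem_sphere hx' hw) (analyticOnNhd_slice hκ hx')
  rw [htrace, inv_mul_cancel_left₀ Complex.two_pi_I_ne_zero]

theorem exists_eventually_isZeroEnumeration (hB : IsWeierstrassBidisc f p ρ r) :
    ∃ (n : ℕ) (v : ℂ → Fin n → ℂ),
      ∀ᶠ x in 𝓝 p.1, IsZeroEnumeration (fun w => f (x, w)) (closedBall p.2 r) (v x) := by
  have hslice : ∀ x, ∃ (n : ℕ) (v : Fin n → ℂ), x ∈ closedBall p.1 ρ →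
      IsZeroEnumeration (fun w => f (x, w)) (closedBall p.2 r) v := fun x => by
    by_cases hx : x ∈ closedBall p.1 ρ
    · obtain ⟨n, v, hv⟩ := exists_isZeroEnumeration_closedBall hB.radius_snd_pos
        (analyticOnNhd_slice hB.analyticOnNhd hx) fun w hw => hB.ne_zero_of_mem_sphere hx hw
      exact ⟨n, v, fun _ => hv⟩
    · exact ⟨0, 0, fun h => absurd h hx⟩
  choose n v hv using hslice
  have hball : ∀ᶠ x in 𝓝 p.1, x ∈ closedBall p.1 ρ := closedBall_mem_nhds _ hB.radius_fst_pos
  have hcount : AnalyticAt ℂ (fun x => (n x : ℂ)) p.1 := by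
    simpa using hB.analyticAt_sum_of_isZeroEnumeration (κ := 1) (fun _ _ => analyticAt_const)
      (hball.mono hv)
  refine ⟨n p.1, Eventually.choice ?_⟩
  filter_upwards [hball, eventually_eq_of_continuousAt_natCast hcount.continuousAt] with x hx hnx
  exact hnx ▸ ⟨v x, hv x hx⟩

lemma analyticAt_prod_of_isZeroEnumeration (hB : IsWeierstrassBidisc f p ρ r) {κ : ℂ × ℂ → ℂ}
    (hκ : AnalyticOnNhd ℂ κ (closedBall p.1 ρ ×ˢ closedBall p.2 r)) {ι : Type*} [Fintype ι]
    {v : ℂ → ι → ℂ}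
    (hv : ∀ᶠ x in 𝓝 p.1, IsZeroEnumeration (fun w => f (x, w)) (closedBall p.2 r) (v x)) :
    AnalyticAt ℂ (fun x => ∏ i, κ (x, v x i)) p.1 :=
  analyticAt_prod_of_analyticAt_psum fun j =>
    hB.analyticAt_sum_of_isZeroEnumeration (κ := fun z => κ z ^ j)
      (fun z hz => (hκ z hz).fun_pow j) hv

lemma exists_eventually_prod_add_mul_ne_zero (hB : IsWeierstrassBidisc f p ρ r) {a b : ℂ × ℂ → ℂ}
    (ha : AnalyticOnNhd ℂ a (closedBall p.1 ρ ×ˢ closedBall p.2 r))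
    (hb : AnalyticOnNhd ℂ b (closedBall p.1 ρ ×ˢ closedBall p.2 r))
    (hab : ∀ z ∈ closedBall p.1 ρ ×ˢ closedBall p.2 r, f z = 0 → z ≠ p → ¬(a z = 0 ∧ b z = 0))
    {ι : Type*} [Fintype ι] {v : ℂ → ι → ℂ}
    (hv : ∀ᶠ x in 𝓝 p.1, IsZeroEnumeration (fun w => f (x, w)) (closedBall p.2 r) (v x)) :
    ∃ s : ℂ, ∀ᶠ x in 𝓝[≠] p.1, ∏ i, (a (x, v x i) + s * b (x, v x i)) ≠ 0 := by
  by_contra! hzero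
  have hprod (s : ℂ) : ∀ᶠ x in 𝓝 p.1, ∏ i, (a (x, v x i) + s * b (x, v x i)) = 0 := by
    have hs := hB.analyticAt_prod_of_isZeroEnumeration (κ := fun z => a z + s * b z)
      (fun z hz => (ha z hz).fun_add (analyticAt_const.fun_mul (hb z hz))) hv
    refine hs.eventually_eq_zero_or_eventually_ne_zero.resolve_right fun hne => ?_
    exact hzero s (hne.mono fun _ h h0 => h h0)
  have hall : ∀ᶠ x in 𝓝[≠] p.1, ∀ s : Fin (Fintype.card ι + 1),
      ∏ i, (a (x, v x i) + (s : ℕ) * b (x, v x i)) = 0 :=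
    nhdsWithin_le_nhds (eventually_all.2 fun s => hprod _)
  have hvρ := (hv.and (closedBall_mem_nhds p.1 hB.radius_fst_pos)).filter_mono
    (nhdsWithin_le_nhds (s := {p.1}ᶜ))
  obtain ⟨x, hx0, ⟨hvx, hx⟩, hxp⟩ := (hall.and (hvρ.and self_mem_nhdsWithin)).exists
  obtain ⟨i, hi⟩ := exists_eq_zero_and_eq_zero_of_prod_add_natCast_mul_eq_zero hx0
  have hfi : f (x, v x i) = 0 := (hvx.eq_zero_iff (hvx.mem i)).2 ⟨i, rfl⟩
  exact hab (x, v x i) ⟨hx, hvx.mem i⟩ hfi (fun h => hxp (congrArg Prod.fst h)) hi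

theorem exists_eventually_add_mul_ne_zero (hB : IsWeierstrassBidisc f p ρ r) {a b : ℂ × ℂ → ℂ}
    (ha : AnalyticOnNhd ℂ a (closedBall p.1 ρ ×ˢ closedBall p.2 r))
    (hb : AnalyticOnNhd ℂ b (closedBall p.1 ρ ×ˢ closedBall p.2 r))
    (hab : ∀ z ∈ closedBall p.1 ρ ×ˢ closedBall p.2 r, f z = 0 → z ≠ p → ¬(a z = 0 ∧ b z = 0)) :
    ∃ s : ℂ, ∀ᶠ z in 𝓝 p, f z = 0 → z ≠ p → a z + s * b z ≠ 0 := by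
  obtain ⟨n, v, hv⟩ := hB.exists_eventually_isZeroEnumeration
  obtain ⟨s, hs⟩ := hB.exists_eventually_prod_add_mul_ne_zero ha hb hab hv
  have hfst : Tendsto Prod.fst (𝓝 p) (𝓝 p.1) := continuous_fst.tendsto p
  refine ⟨s, ?_⟩
  filter_upwards [hB.prod_ball_mem_nhds, hfst.eventually hv,
    hfst.eventually (eventually_nhdsWithin_iff.1 hs)] with ⟨x, y⟩ ⟨_, hy⟩ hvx hsx hfxy hne hs0
  have hy' := ball_subset_closedBall hy
  have hxp : x ≠ p.1 := by
    rintro rfl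
    exact hne (Prod.ext rfl (hB.eq_of_eq_zero hy' hfxy))
  obtain ⟨i, hi⟩ := (hvx.eq_zero_iff hy').1 hfxy
  exact hsx hxp (Finset.prod_eq_zero (Finset.mem_univ i) (hi ▸ hs0))

end IsWeierstrassBidisc

/-! ### Germs of curves -/

lemma exists_ne_zero_not_eventually_add_smul_eq_zero {E F : Type*} [NormedAddCommGroup E]
    [NormedSpace ℂ E] [Nontrivial E] [NormedAddCommGroup F] [NormedSpace ℂ F]
    [CompleteSpace F] {f : E → F} {p : E}
    (hf : AnalyticAt ℂ f p) (hne : ¬∀ᶠ z in 𝓝 p, f z = 0) :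
    ∃ v : E, v ≠ 0 ∧ ¬∀ᶠ t in 𝓝 (0 : ℂ), f (p + t • v) = 0 := by
  by_contra! hline
  refine hne ((hf.continuousAt.eventuallyEq_nhds_iff_eventuallyEq_nhdsNE continuousAt_const).1 ?_)
  obtain ⟨ε, hε, hball⟩ := Metric.eventually_nhds_iff_ball.1 hf.eventually_analyticAt
  filter_upwards [nhdsWithin_le_nhds (ball_mem_nhds p hε), self_mem_nhdsWithin] with z hz hzp
  have hf_line : AnalyticOnNhd ℂ (fun t : ℂ => f (p + t • (z - p))) (closedBall 0 1) := by
    intro t ht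
    refine (hball _ ?_).fun_comp
      (analyticAt_const.fun_add (analyticAt_id.fun_smul analyticAt_const))
    rw [mem_ball_iff_norm] at hz ⊢
    rw [add_sub_cancel_left, norm_smul]
    exact (mul_le_of_le_one_left (norm_nonneg _) (mem_closedBall_zero_iff.1 ht)).trans_lt hz
  have hzero := hf_line.eqOn_zero_of_preconnected_of_eventuallyEq_zero
    (convex_closedBall (0 : ℂ) 1).isPreconnected (mem_closedBall_self zero_le_one)
    (hline (z - p) (sub_ne_zero.2 hzp))
  simpa using hzero (show (1 : ℂ) ∈ closedBall 0 1 by simp)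

lemma exists_continuousLinearEquiv_not_eventually_slice_eq_zero {f : ℂ × ℂ → ℂ} {p : ℂ × ℂ}
    (hf : AnalyticAt ℂ f p) (hne : ¬∀ᶠ z in 𝓝 p, f z = 0) :
    ∃ A : (ℂ × ℂ) ≃L[ℂ] ℂ × ℂ,
      ¬∀ᶠ w in 𝓝 (A.symm p).2, f (A ((A.symm p).1, w)) = 0 := by
  obtain ⟨v, hv, hslice⟩ := exists_ne_zero_not_eventually_add_smul_eq_zero hf hne
  obtain ⟨A, hA⟩ := SeparatingDual.exists_continuousLinearEquiv_apply_eq (R := ℂ)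
    (x := ((0 : ℂ), (1 : ℂ))) (y := v) (by simp) hv
  refine ⟨A, fun h => hslice ?_⟩
  have hshift : Tendsto (fun t : ℂ => (A.symm p).2 + t) (𝓝 0) (𝓝 (A.symm p).2) := by
    simpa using (continuous_const_add (A.symm p).2).tendsto 0
  filter_upwards [hshift.eventually h] with t ht
  have hsplit : ((A.symm p).1, (A.symm p).2 + t) = A.symm p + t • ((0 : ℂ), (1 : ℂ)) := by
    ext <;> simp
  rwa [hsplit, map_add, map_smul, hA, A.apply_symm_apply] at ht

theorem exists_continuousLinearEquiv_isWeierstrassBidisc {f : ℂ × ℂ → ℂ} {p : ℂ × ℂ}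
    (hf : AnalyticAt ℂ f p) (hne : ¬∀ᶠ z in 𝓝 p, f z = 0) {P : ℂ × ℂ → Prop}
    (hP : ∀ᶠ z in 𝓝 p, P z) :
    ∃ (A : (ℂ × ℂ) ≃L[ℂ] ℂ × ℂ) (ρ r : ℝ), IsWeierstrassBidisc (f ∘ A) (A.symm p) ρ r ∧
      ∀ z ∈ closedBall (A.symm p).1 ρ ×ˢ closedBall (A.symm p).2 r, P (A z) := by
  obtain ⟨A, hslice⟩ := exists_continuousLinearEquiv_not_eventually_slice_eq_zero hf hne
  have hA : Tendsto A (𝓝 (A.symm p)) (𝓝 p) := by simpa using A.continuous.tendsto (A.symm p)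
  have hfA : AnalyticAt ℂ (f ∘ A) (A.symm p) :=
    AnalyticAt.comp (by simpa using hf) (A.analyticAt _)
  exact ⟨A, exists_isWeierstrassBidisc hfA hslice (hA.eventually hP)⟩

theorem exists_analyticAt_eventually_eq_mul {f h : ℂ × ℂ → ℂ} {p : ℂ × ℂ} (hf : AnalyticAt ℂ f p)
    (hne : ¬∀ᶠ z in 𝓝 p, f z = 0) (hh : AnalyticAt ℂ h p)
    (hO : ∀ᶠ z in 𝓝[≠] p, h =O[𝓝 z] f) :
    ∃ c, AnalyticAt ℂ c p ∧ ∀ᶠ z in 𝓝 p, h z = f z * c z := by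
  obtain ⟨A, ρ, r, hB, hP⟩ := exists_continuousLinearEquiv_isWeierstrassBidisc hf hne
    (hh.eventually_analyticAt.and (eventually_nhdsWithin_iff.1 hO))
  obtain ⟨c, hc, hfac⟩ := hB.exists_eventually_eq_mul (h := h ∘ A)
    (fun z hz => (hP z hz).1.comp (A.analyticAt z))
    (fun z hz hzp => ((hP z hz).2 fun h => hzp (A.eq_symm_apply.2 h)).comp_tendsto
      (A.continuous.tendsto z))
  refine ⟨c ∘ A.symm, hc.comp (A.symm.analyticAt p), ?_⟩
  filter_upwards [(A.symm.continuous.tendsto p).eventually hfac] with z hz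
  simpa using hz

theorem exists_eventually_add_mul_ne_zero {f a b : ℂ × ℂ → ℂ} {p : ℂ × ℂ} (hf : AnalyticAt ℂ f p)
    (hne : ¬∀ᶠ z in 𝓝 p, f z = 0) (ha : AnalyticAt ℂ a p) (hb : AnalyticAt ℂ b p)
    (hab : ∀ᶠ z in 𝓝 p, f z = 0 → z ≠ p → ¬(a z = 0 ∧ b z = 0)) :
    ∃ s : ℂ, ∀ᶠ z in 𝓝 p, f z = 0 → z ≠ p → a z + s * b z ≠ 0 := by
  obtain ⟨A, ρ, r, hB, hP⟩ := exists_continuousLinearEquiv_isWeierstrassBidisc hf hne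
    (ha.eventually_analyticAt.and (hb.eventually_analyticAt.and hab))
  obtain ⟨s, hs⟩ := hB.exists_eventually_add_mul_ne_zero (a := a ∘ A) (b := b ∘ A)
    (fun z hz => (hP z hz).1.comp (A.analyticAt z))
    (fun z hz => (hP z hz).2.1.comp (A.analyticAt z))
    (fun z hz hfz hzp => (hP z hz).2.2 hfz fun h => hzp (A.eq_symm_apply.2 h))
  refine ⟨s, ?_⟩
  filter_upwards [(A.symm.continuous.tendsto p).eventually hs] with z hz hfz hzp
  simpa using hz (by simpa using hfz) (A.symm.injective.ne hzp)

lemma not_eventually_eq_zero_of_fderiv_ne_zero {𝕜 E F : Type*} [NontriviallyNormedField 𝕜]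
    [NormedAddCommGroup E] [NormedSpace 𝕜 E] [Nontrivial E] [NormedAddCommGroup F]
    [NormedSpace 𝕜 F] {f : E → F} {p : E}
    (hred : ∀ᶠ z in 𝓝[≠] p, f z = 0 → fderiv 𝕜 f z ≠ 0) : ¬∀ᶠ z in 𝓝 p, f z = 0 := by
  intro hzero
  have : (𝓝[≠] p).NeBot := Module.punctured_nhds_neBot 𝕜 E p
  obtain ⟨z, hredz, hz⟩ := (hred.and (nhdsWithin_le_nhds hzero.eventually_nhds)).exists
  have hfz : f =ᶠ[𝓝 z] fun _ => 0 := hz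
  exact hredz hz.self_of_nhds (by simp [hfz.fderiv_eq])

theorem exists_analyticAt_eventually_eq_mul_of_fderiv_ne_zero {f h : ℂ × ℂ → ℂ} {p : ℂ × ℂ}
    (hf : AnalyticAt ℂ f p) (hh : AnalyticAt ℂ h p)
    (hred : ∀ᶠ z in 𝓝[≠] p, f z = 0 → fderiv ℂ f z ≠ 0)
    (hzero : ∀ᶠ z in 𝓝 p, f z = 0 → h z = 0) :
    ∃ c, AnalyticAt ℂ c p ∧ ∀ᶠ z in 𝓝 p, h z = f z * c z := by
  have hne := not_eventually_eq_zero_of_fderiv_ne_zero hred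
  refine exists_analyticAt_eventually_eq_mul hf hne hh ?_
  filter_upwards [hred, nhdsWithin_le_nhds hf.eventually_analyticAt,
    nhdsWithin_le_nhds hh.eventually_analyticAt, nhdsWithin_le_nhds hzero.eventually_nhds]
    with z hredz hfz hhz hzeroz using isBigO_of_fderiv_ne_zero hfz hhz hredz hzeroz

end Suwa

theorem suwa_decomposition_general (p : ℂ × ℂ) (f a b fx fy : ℂ × ℂ → ℂ)
    (U : Set (ℂ × ℂ)) (hU : IsOpen U) (hpU : p ∈ U)
    (hf : AnalyticOnNhd ℂ f U)
    (ha : AnalyticOnNhd ℂ a U) (hb : AnalyticOnNhd ℂ b U)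
    (hfx : ∀ z ∈ U, HasDerivAt (fun t => f (t, z.2)) (fx z) z.1)
    (hfy : ∀ z ∈ U, HasDerivAt (fun t => f (z.1, t)) (fy z) z.2)
    (hred : ∀ z ∈ U, f z = 0 → z ≠ p → ¬(fx z = 0 ∧ fy z = 0))
    (hsat : ∀ z ∈ U, f z = 0 → z ≠ p → ¬(a z = 0 ∧ b z = 0))
    (hinv : ∀ z ∈ U, f z = 0 → a z * fy z - b z * fx z = 0) :
    ∃ V ⊆ U, IsOpen V ∧ p ∈ V ∧
      ∃ g k c d : ℂ × ℂ → ℂ,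
        AnalyticOnNhd ℂ g V ∧ AnalyticOnNhd ℂ k V ∧
        AnalyticOnNhd ℂ c V ∧ AnalyticOnNhd ℂ d V ∧
        (∀ z ∈ V, g z * a z = k z * fx z + f z * c z ∧
          g z * b z = k z * fy z + f z * d z) ∧
        (∀ z ∈ V, f z = 0 → z ≠ p → k z ≠ 0) := by
  have hfx_eq : Set.EqOn (fun z => fderiv ℂ f z (1, 0)) fx U := fun z hz =>
    (Suwa.hasDerivAt_prodMk_left (hf z hz).differentiableAt).unique (hfx z hz)
  have hfy_eq : Set.EqOn (fun z => fderiv ℂ f z (0, 1)) fy U := fun z hz =>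
    (Suwa.hasDerivAt_prodMk_right (hf z hz).differentiableAt).unique (hfy z hz)
  have hfx_an := (Suwa.analyticOnNhd_fderiv_apply hf (1, 0)).congr hU hfx_eq
  have hfy_an := (Suwa.analyticOnNhd_fderiv_apply hf (0, 1)).congr hU hfy_eq
  have hω_df : AnalyticOnNhd ℂ (fun z => a z * fy z - b z * fx z) U :=
    (ha.mul hfy_an).sub (hb.mul hfx_an)
  have hU_near : ∀ᶠ z in nhds p, z ∈ U := hU.mem_nhds hpU
  have hdf : ∀ᶠ z in nhdsWithin p {p}ᶜ, f z = 0 → fderiv ℂ f z ≠ 0 :=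
    eventually_nhdsWithin_iff.2 <| hU_near.mono fun z hz hzp hfz hd =>
      hred z hz hfz hzp (by simp [← hfx_eq hz, ← hfy_eq hz, hd])
  obtain ⟨c, hc, hfac⟩ := Suwa.exists_analyticAt_eventually_eq_mul_of_fderiv_ne_zero (hf p hpU)
    (hω_df p hpU) hdf (hU_near.mono hinv)
  obtain ⟨s, hs⟩ := Suwa.exists_eventually_add_mul_ne_zero (hf p hpU)
    (Suwa.not_eventually_eq_zero_of_fderiv_ne_zero hdf) (ha p hpU) (hb p hpU) (hU_near.mono hsat)
  obtain ⟨V, hV, hVo, hpV⟩ := eventually_nhds_iff.1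
    (hU_near.and (hc.eventually_analyticAt.and (hfac.and hs)))
  have hVU : V ⊆ U := fun z hz => (hV z hz).1
  have hcV : AnalyticOnNhd ℂ c V := fun z hz => (hV z hz).2.1
  refine ⟨V, hVU, hVo, hpV, fun z => fx z + s * fy z, fun z => a z + s * b z,
    fun z => s * c z, fun z => -c z,
    (hfx_an.add (analyticOnNhd_const.mul hfy_an)).mono hVU,
    (ha.add (analyticOnNhd_const.mul hb)).mono hVU, analyticOnNhd_const.mul hcV, hcV.neg,
    fun z hz => ?_, fun z hz => (hV z hz).2.2.2⟩
  obtain ⟨-, -, hz_fac, -⟩ := hV z hz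
  exact ⟨by linear_combination s * hz_fac, by linear_combination -hz_fac⟩

/-- Suwa-type decomposition underlying the Camacho–Sad index: let `F` be a holomorphic
foliation near `p ∈ ℂ²` defined by the 1-form `ω = a dx + b dy` with zero set of
codimension 2 (zeros only at `p`), and let `C = {f = 0}` be an invariant analytic curve
through `p` defined by a reduced holomorphic `f` (smooth away from `p`). Then near `p`
there are holomorphic functions `g`, `k` and a holomorphic 1-form `η = c dx + d dy` with
`g ω = k df + f η` and `k` nonvanishing on `C ∖ {p}` (in particular `k` is not identically
zero on `C`). -/
theorem suwa_decomposition (p : ℂ × ℂ) (f a b fx fy : ℂ × ℂ → ℂ)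
    (U : Set (ℂ × ℂ)) (hU : IsOpen U) (hpU : p ∈ U)
    (hf : AnalyticOnNhd ℂ f U)
    (ha : AnalyticOnNhd ℂ a U) (hb : AnalyticOnNhd ℂ b U)
    (hfx : ∀ z ∈ U, HasDerivAt (fun t => f (t, z.2)) (fx z) z.1)
    (hfy : ∀ z ∈ U, HasDerivAt (fun t => f (z.1, t)) (fy z) z.2)
    (hfp : f p = 0)
    -- `f` is reduced: `C` is smooth away from `p`
    (hred : ∀ z ∈ U, f z = 0 → z ≠ p → ¬(fx z = 0 ∧ fy z = 0))
    -- `ω` has singular set of codimension 2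
    (hsat : ∀ z ∈ U, z ≠ p → ¬(a z = 0 ∧ b z = 0))
    -- `C` is invariant: `ω ∧ df = 0` on `C`
    (hinv : ∀ z ∈ U, f z = 0 → a z * fy z - b z * fx z = 0) :
    ∃ V ⊆ U, IsOpen V ∧ p ∈ V ∧
      ∃ g k c d : ℂ × ℂ → ℂ,
        AnalyticOnNhd ℂ g V ∧ AnalyticOnNhd ℂ k V ∧
        AnalyticOnNhd ℂ c V ∧ AnalyticOnNhd ℂ d V ∧
        (∀ z ∈ V, g z * a z = k z * fx z + f z * c z ∧
          g z * b z = k z * fy z + f z * d z) ∧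
        (∀ z ∈ V, f z = 0 → z ≠ p → k z ≠ 0) :=
  suwa_decomposition_general p f a b fx fy U hU hpU hf ha hb hfx hfy hred
    (fun z hz _ => hsat z hz) hinv
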